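/- Let F be an hke collection. Then F is a maximal hke collection if and only if |F| = 2^{α(F)}. -/

import Mathlib

open Finset

/-- The union of a finite collection of finite sets. -/
def famUnion (Γ : Finset (Finset ℕ)) : Finset ℕ := Γ.sup id

/-- The intersection of a finite collection of finite sets
(equal to the usual intersection when the collection is nonempty). -/
def famInter (Γ : Finset (Finset ℕ)) : Finset ℕ :=
  (Γ.sup id).filter (fun x => ∀ A ∈ Γ, x ∈ A)

/-- `F` is a hereditary König–Egerváry (hke) collection with `α(F) = α`:
`α` is a positive integer and `|⋃Γ| + |⋂Γ| = 2α` for every nonempty subcollection `Γ` of `F`. -/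
def IsHKE (F : Finset (Finset ℕ)) (α : ℕ) : Prop :=
  0 < α ∧ ∀ Γ ⊆ F, Γ.Nonempty → (famUnion Γ).card + (famInter Γ).card = 2 * α

/-- `F` is a maximal hke collection: it is an hke collection and no collection
properly containing it is an hke collection. -/
def IsMaxHKE (F : Finset (Finset ℕ)) : Prop :=
  (∃ α, IsHKE F α) ∧ ∀ F' : Finset (Finset ℕ), F ⊂ F' → ¬ ∃ β, IsHKE F' β

theorem mob_aux (F : Finset (Finset ℕ)) (s t : Finset ℕ) (u w : ℕ → Finset (Finset ℕ))
    (hu : ∀ x, u x ⊆ F) (hw : ∀ x, w x ⊆ F)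
    (h : ∀ Γ ⊆ F, (s.filter (fun x => Γ ⊆ u x)).card = (t.filter (fun x => Γ ⊆ w x)).card) :
    ∀ n : ℕ, ∀ Γ ⊆ F, (F \ Γ).card = n →
      (s.filter (fun x => u x = Γ)).card = (t.filter (fun x => w x = Γ)).card := by
  intro n
  induction n using Nat.strong_induction_on with
  | _ n ih =>
  intro Γ hΓ hn
  have key : ∀ (s : Finset ℕ) (u : ℕ → Finset (Finset ℕ)), (∀ x, u x ⊆ F) →
      (s.filter (fun x => Γ ⊆ u x)).card = (s.filter (fun x => u x = Γ)).card +
        ∑ T ∈ F.powerset.filter (fun T => Γ ⊂ T), (s.filter (fun x => u x = T)).card := by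
    intro s u hu
    have h1 : s.filter (fun x => Γ ⊆ u x) =
        s.filter (fun x => u x = Γ) ∪ s.filter (fun x => Γ ⊂ u x) := by
      ext x
      simp only [mem_filter, mem_union]
      rw [subset_iff_ssubset_or_eq]
      constructor
      · rintro ⟨a, b | b⟩
        · exact Or.inr ⟨a, b⟩
        · exact Or.inl ⟨a, b.symm⟩
      · rintro (⟨a, b⟩ | ⟨a, b⟩)
        · exact ⟨a, Or.inr b.symm⟩
        · exact ⟨a, Or.inl b⟩
    rw [h1, card_union_of_disjoint]
    · congr 1
      rw [card_eq_sum_card_fiberwise (f := u) (t := F.powerset.filter (fun T => Γ ⊂ T))]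
      · apply sum_congr rfl
        intro T hT
        congr 1
        ext x
        simp only [mem_filter] at hT ⊢
        constructor
        · rintro ⟨⟨a, b⟩, c⟩
          exact ⟨a, c⟩
        · rintro ⟨a, c⟩
          exact ⟨⟨a, c ▸ hT.2⟩, c⟩
      · intro x hx
        simp only [coe_filter, Set.mem_ofPred_eq, mem_powerset] at hx ⊢
        exact ⟨hu x, hx.2⟩
    · rw [Finset.disjoint_left]
      intro x hx hx'
      simp only [mem_filter] at hx hx'
      rw [hx.2] at hx'
      exact (ssubset_irrefl _) hx'.2
  have e := h Γ hΓ
  rw [key s u hu, key t w hw] at e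
  have e2 : ∑ T ∈ F.powerset.filter (fun T => Γ ⊂ T), (s.filter (fun x => u x = T)).card =
      ∑ T ∈ F.powerset.filter (fun T => Γ ⊂ T), (t.filter (fun x => w x = T)).card := by
    apply sum_congr rfl
    intro T hT
    simp only [mem_filter, mem_powerset] at hT
    refine ih _ ?_ T hT.1 rfl
    rw [← hn, card_sdiff_of_subset hT.1, card_sdiff_of_subset hΓ]
    have := card_lt_card hT.2
    have := card_le_card hT.1
    omega
  omega

def trSet {α : ℕ} (g : Fin α × Bool ↪ ℕ) (s : Fin α → Bool) : Finset ℕ :=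
  univ.image (fun i => g (i, s i))

def trFam {α : ℕ} (g : Fin α × Bool ↪ ℕ) : Finset (Finset ℕ) := univ.image (trSet g)

theorem mem_trSet {α : ℕ} (g : Fin α × Bool ↪ ℕ) (s : Fin α → Bool) (i : Fin α) (b : Bool) :
    g (i, b) ∈ trSet g s ↔ s i = b := by
  simp [trSet]

theorem card_trFam {α : ℕ} (g : Fin α × Bool ↪ ℕ) : (trFam g).card = 2 ^ α := by
  rw [trFam, card_image_of_injective]
  · simp
  · intro s s' h
    funext i
    have : g (i, s' i) ∈ trSet g s := by
      rw [h, mem_trSet]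
    exact (mem_trSet _ _ _ _).1 this

theorem mem_famUnion (Γ : Finset (Finset ℕ)) (x : ℕ) : x ∈ famUnion Γ ↔ ∃ A ∈ Γ, x ∈ A := by
  simp [famUnion, Finset.mem_sup]

theorem mem_famInter (Γ : Finset (Finset ℕ)) (hΓ : Γ.Nonempty) (x : ℕ) :
    x ∈ famInter Γ ↔ ∀ A ∈ Γ, x ∈ A := by
  obtain ⟨B, hB⟩ := hΓ
  simp only [famInter, mem_filter, Finset.mem_sup, id]
  exact ⟨fun h => h.2, fun h => ⟨⟨B, hB, h B hB⟩, h⟩⟩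

theorem trFam_hke {α : ℕ} (hα : 0 < α) (g : Fin α × Bool ↪ ℕ) : IsHKE (trFam g) α := by
  refine ⟨hα, fun Γ hΓ hne => ?_⟩
  have hr : ∀ A ∈ Γ, ∃ s, trSet g s = A := by
    intro A hA
    simpa [trFam] using hΓ hA
  have hsub : ∀ A ∈ Γ, ∀ x ∈ A, ∃ p, g p = x := by
    intro A hA x hx
    obtain ⟨s, rfl⟩ := hr A hA
    simp only [trSet, mem_image, mem_univ, true_and] at hx
    obtain ⟨i, hi⟩ := hx
    exact ⟨_, hi⟩
  classical
  let P : Finset (Fin α × Bool) := univ.filter (fun p => ∃ A ∈ Γ, g p ∈ A)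
  let Q : Finset (Fin α × Bool) := univ.filter (fun p => ∀ A ∈ Γ, g p ∈ A)
  have hU : famUnion Γ = P.map g := by
    ext x
    simp only [mem_famUnion, mem_map, P, mem_filter, mem_univ, true_and]
    constructor
    · rintro ⟨A, hA, hx⟩
      obtain ⟨p, rfl⟩ := hsub A hA x hx
      exact ⟨p, ⟨A, hA, hx⟩, rfl⟩
    · rintro ⟨p, h, rfl⟩
      exact h
  have hI : famInter Γ = Q.map g := by
    ext x
    simp only [mem_famInter Γ hne, mem_map, Q, mem_filter, mem_univ, true_and]
    constructor
    · intro h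
      obtain ⟨A, hA⟩ := hne
      obtain ⟨p, rfl⟩ := hsub A hA x (h A hA)
      exact ⟨p, h, rfl⟩
    · rintro ⟨p, h, rfl⟩
      exact h
  have hinj : Function.Injective (fun p : Fin α × Bool => (p.1, !p.2)) := by
    rintro ⟨i, b⟩ ⟨j, c⟩ h
    simpa using h
  have hQ : Pᶜ = Q.image (fun p => (p.1, !p.2)) := by
    ext ⟨i, b⟩
    simp only [P, Q, mem_compl, mem_filter, mem_univ, true_and, mem_image, not_exists, not_and]
    constructor
    · intro h
      refine ⟨(i, !b), fun A hA => ?_, by simp⟩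
      have := h A hA
      obtain ⟨s, rfl⟩ := hr A hA
      rw [mem_trSet] at this ⊢
      cases b <;> simpa using this
    · rintro ⟨⟨j, c⟩, h, h2⟩ A hA
      simp only [Prod.mk.injEq] at h2
      obtain ⟨rfl, rfl⟩ := h2
      have := h A hA
      obtain ⟨s, rfl⟩ := hr A hA
      rw [mem_trSet] at this ⊢
      rw [this]; cases c <;> simp
  have h3 : Q.card = Pᶜ.card := by rw [hQ, card_image_of_injective _ hinj]
  rw [hU, hI, card_map, card_map, h3, card_add_card_compl]
  simp [mul_comm]

theorem exists_tr (F : Finset (Finset ℕ)) (α : ℕ) (hF : IsHKE F α) (hne : F.Nonempty) :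
    ∃ g : Fin α × Bool ↪ ℕ, F ⊆ trFam g := by
  classical
  obtain ⟨A0, hA0⟩ := hne
  have hcard : ∀ A ∈ F, A.card = α := by
    intro A hA
    have h := hF.2 {A} (by simpa using hA) (by simp)
    have h1 : famUnion {A} = A := by ext; simp [mem_famUnion]
    have h2 : famInter {A} = A := by ext; simp [mem_famInter]
    rw [h1, h2] at h
    omega
  have hUF := hF.2 F (Subset.refl _) ⟨A0, hA0⟩
  obtain ⟨J, hJ, hJc⟩ := Infinite.exists_superset_card_eq (famUnion F) (2 * α) (by omega)
  -- J is the ground set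
  have hAJ : ∀ A ∈ F, A ⊆ J := fun A hA x hx => hJ ((mem_famUnion _ _).2 ⟨A, hA, hx⟩)
  let u : ℕ → Finset (Finset ℕ) := fun x => F.filter (fun A => x ∈ A)
  let w : ℕ → Finset (Finset ℕ) := fun x => F.filter (fun A => x ∉ A)
  have hm := mob_aux F A0 (J \ A0) u w (fun _ => filter_subset _ _) (fun _ => filter_subset _ _) (by
    intro Γ hΓ
    have hins : insert A0 Γ ⊆ F := insert_subset hA0 hΓ
    have h := hF.2 (insert A0 Γ) hins (insert_nonempty _ _)
    have h1 : A0.filter (fun x => Γ ⊆ u x) = famInter (insert A0 Γ) := by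
      ext x
      rw [mem_famInter _ (insert_nonempty _ _)]
      simp only [mem_filter, forall_mem_insert, u]
      refine and_congr_right fun _ => ⟨fun h A hA => (mem_filter.1 (h hA)).2,
        fun h A hA => mem_filter.2 ⟨hΓ hA, h A hA⟩⟩
    have h2 : (J \ A0).filter (fun x => Γ ⊆ w x) = J \ famUnion (insert A0 Γ) := by
      ext x
      rw [mem_sdiff, mem_famUnion]
      simp only [mem_filter, mem_sdiff, w, not_exists, not_and, forall_mem_insert]
      rw [and_assoc]
      refine and_congr_right fun _ => and_congr_right fun _ =>
        ⟨fun h A hA => (mem_filter.1 (h hA)).2,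
        fun h A hA => mem_filter.2 ⟨hΓ hA, h A hA⟩⟩
    rw [h1, h2, card_sdiff_of_subset, hJc]
    · omega
    · intro x hx
      obtain ⟨A, hA, hx⟩ := (mem_famUnion _ _).1 hx
      exact hAJ A (hins hA) hx)
  have hfib : ∀ T : Finset (Finset ℕ),
      Nonempty ({a : A0 // u a.1 = T} ≃ {b : (J \ A0 : Finset ℕ) // w b.1 = T}) := by
    intro T
    rw [← Fintype.card_eq]
    have c1 : ∀ (S : Finset ℕ) (v : ℕ → Finset (Finset ℕ)),
        Fintype.card {a : S // v a.1 = T} = (S.filter (fun x => v x = T)).card := by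
      intro S v
      rw [Fintype.card_subtype]
      rw [← card_map (Function.Embedding.subtype _)]
      congr 1
      ext x
      simp [and_comm]
    rw [c1 A0 u, c1 (J \ A0) w]
    by_cases hT : T ⊆ F
    · exact hm _ T hT rfl
    · rw [filter_false_of_mem, filter_false_of_mem]
      · rintro x _ rfl; exact hT (filter_subset _ _)
      · rintro x _ rfl; exact hT (filter_subset _ _)
  let e : A0 ≃ (J \ A0 : Finset ℕ) := Equiv.ofFiberEquiv (f := fun a : A0 => u a.1)
    (g := fun b : (J \ A0 : Finset ℕ) => w b.1) (fun T => (hfib T).some)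
  have he : ∀ a : A0, w (e a).1 = u a.1 := fun a =>
    Equiv.ofFiberEquiv_map (f := fun a : A0 => u a.1)
      (g := fun b : (J \ A0 : Finset ℕ) => w b.1) (fun T => (hfib T).some) a
  have he' : ∀ a : A0, ∀ A ∈ F, ((e a).1 ∈ A ↔ a.1 ∉ A) := by
    intro a A hA
    have h := he a
    have : A ∈ w (e a).1 ↔ A ∈ u a.1 := by rw [h]
    simp only [u, w, mem_filter, hA, true_and] at this
    tauto
  let k : Fin α ≃ A0 := (finCongr (hcard A0 hA0).symm).trans A0.equivFin.symm
  let g : Fin α × Bool → ℕ := fun p => if p.2 then (k p.1).1 else (e (k p.1)).1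
  have hge : ∀ a : A0, (e a).1 ∉ A0 := fun a => (mem_sdiff.1 (e a).2).2
  have hg : Function.Injective g := by
    rintro ⟨i, b⟩ ⟨j, c⟩ h
    cases b <;> cases c <;> simp [g] at h ⊢
    · exact h
    · exact absurd (h ▸ (k j).2) (hge (k i))
    · exact absurd (h ▸ (k i).2) (hge (k j))
    · exact h
  refine ⟨⟨g, hg⟩, fun A hA => ?_⟩
  simp only [trFam, mem_image, mem_univ, true_and]
  refine ⟨fun i => decide ((k i).1 ∈ A), ?_⟩
  ext x
  simp only [trSet, mem_image, mem_univ, true_and, Function.Embedding.coeFn_mk, g]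
  constructor
  · rintro ⟨i, rfl⟩
    by_cases h : (k i).1 ∈ A
    · simp [h]
    · simpa [h] using (he' (k i) A hA).2 h
  · intro hx
    by_cases h0 : x ∈ A0
    · refine ⟨k.symm ⟨x, h0⟩, ?_⟩
      simp [hx]
    · have hxJ : x ∈ J \ A0 := mem_sdiff.2 ⟨hAJ A hA hx, h0⟩
      refine ⟨k.symm (e.symm ⟨x, hxJ⟩), ?_⟩
      have := (he' (e.symm ⟨x, hxJ⟩) A hA).1 (by simpa using hx)
      simp [this]

/-- an hke collection `F` is maximal iff `|F| = 2 ^ α(F)`. -/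
theorem isMaxHKE_iff_card_eq_two_pow (F : Finset (Finset ℕ)) (α : ℕ) (hF : IsHKE F α) :
    IsMaxHKE F ↔ F.card = 2 ^ α := by
  constructor
  · rintro ⟨-, hmax⟩
    have : ∃ g : Fin α × Bool ↪ ℕ, F ⊆ trFam g := by
      rcases F.eq_empty_or_nonempty with rfl | hne
      · have : Nonempty (Fin α × Bool ↪ ℕ) := ⟨(Encodable.encode' (Fin α × Bool))⟩
        exact ⟨this.some, empty_subset _⟩
      · exact exists_tr F α hF hne
    obtain ⟨g, hg⟩ := this
    rcases hg.eq_or_ssubset with h | h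
    · rw [h, card_trFam]
    · exact absurd ⟨α, trFam_hke hF.1 g⟩ (hmax _ h)
  · intro hc
    refine ⟨⟨α, hF⟩, ?_⟩
    rintro F' hF' ⟨β, hβ⟩
    have hne : F.Nonempty := by
      rw [← card_pos, hc]; positivity
    have h1 := hF.2 F (Subset.refl _) hne
    have h2 := hβ.2 F hF'.1 hne
    have : β = α := by omega
    subst this
    obtain ⟨g, hg⟩ := exists_tr F' β hβ (hne.mono hF'.1)
    have := card_le_card hg
    rw [card_trFam] at this
    have := card_lt_card hF'
    omega
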